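/- For every nonnegative integer n, there exist integers x, y, z such that n = p_5(x) + 3·p_5(y) + 3·p_5(z), where p_5(x) = (3x² − x)/2. In other words, the sum p_5 + 3p_5 + 3p_5 is universal over ℤ. -/

import Mathlib

/-!
Since `24 p₅(x) + 1 = (6x - 1)²`, it suffices to write `N = 24n + 7` as `a² + 3b² + 3c²` with `a`,
`b`, `c` odd and prime to `3`.

Every positive ternary form of half-discriminant `3` is equivalent to `x² + xy + y² + z²`, by
Hermite reduction. Dirichlet's theorem provides a prime `p` with `4ND = 3p + 1`, reciprocity makes
`-D` a square modulo `p`, say `a p - d² = D`, and then `a x² + p y² + 3N z² + 2d xy + 3 xz` is such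
a form. Hence `3N = u² + uv + v² + w²`, which modulo `3` forces `u ≡ v` and `w ≡ 0`. Writing
`u = v + 3s` and `w = 3t` leaves `N = ((v + s)² + (v + s)s + s²) + 3t²`. A norm of an Eisenstein
integer can be put in the form `a² + 3b²`, and multiplying by sixth roots of unity adjusts
`a` and `b` modulo `2` and `3`.
-/

/-- Generalized pentagonal number: `p₅(x) = (3x² − x)/2`. -/
def p5 (x : ℤ) : ℤ := (3 * x ^ 2 - x) / 2

open scoped Matrix NumberTheorySymbols

lemma exists_two_mul_abs_add_mul_le (r : ℤ) {m : ℤ} (hm : 0 < m) :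
    ∃ k : ℤ, 2 * |r + k * m| ≤ m := by
  lift m to ℕ using hm.le
  have hm' : 0 < m := Int.natCast_pos.mp hm
  have hlt : r.bmod m < (m + 1) / 2 := Int.bmod_lt hm'
  have hle : -(m / 2) ≤ r.bmod m := Int.le_bmod hm'
  refine ⟨-r.bdiv m, ?_⟩
  have hbmod : r + -r.bdiv m * m = r.bmod m := by
    linear_combination -Int.bmod_eq_self_sub_bdiv_mul r m
  rw [hbmod]
  grind

lemma posDef_of_equivalent {R M₁ M₂ N : Type*} [CommSemiring R] [AddCommMonoid M₁]
    [AddCommMonoid M₂] [AddCommMonoid N] [PartialOrder N] [Module R M₁] [Module R M₂] [Module R N]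
    {Q₁ : QuadraticMap R M₁ N} {Q₂ : QuadraticMap R M₂ N} (h : Q₁.Equivalent Q₂)
    (hQ₁ : Q₁.PosDef) : Q₂.PosDef := by
  obtain ⟨g⟩ := h.symm
  intro v hv
  rw [← g.map_app]
  exact hQ₁ _ (g.toLinearEquiv.map_ne_zero_iff.mpr hv)

lemma equivalent_of_apply_mulVec {R n : Type*} [CommRing R] [Fintype n] [DecidableEq n]
    {Q₁ Q₂ : QuadraticForm R (n → R)} (M : Matrix n n R) (hM : IsUnit M.det)
    (h : ∀ v, Q₁ (M *ᵥ v) = Q₂ v) : Q₁.Equivalent Q₂ :=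
  .symm ⟨⟨M.toLinearEquiv' (M.invertibleOfIsUnitDet hM), h⟩⟩

/-- The integral ternary quadratic form `a x² + b y² + c z² + d x y + e x z + f y z`, given by its
coefficients; the cross terms may be odd. -/
structure TernaryForm where
  (a b c d e f : ℤ)

namespace TernaryForm

/-- The quadratic form on `ℤ³` with the given coefficients, whose equivalence and positivity are
those of Mathlib's quadratic maps. -/
def toQuadraticForm (Q : TernaryForm) : QuadraticForm ℤ (Fin 3 → ℤ) :=
  !![Q.a, Q.d, Q.e; 0, Q.b, Q.f; 0, 0, Q.c].toQuadraticForm'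

/-- The half-discriminant: half the determinant of the Hessian matrix, an integer since the
Hessian of an integral form has even diagonal. -/
def disc (Q : TernaryForm) : ℤ :=
  4 * Q.a * Q.b * Q.c + Q.d * Q.e * Q.f - Q.a * Q.f ^ 2 - Q.b * Q.e ^ 2 - Q.c * Q.d ^ 2

/-- The minor of the Hessian matrix with rows `x, y` and columns `x, y`. -/
def minorXY (Q : TernaryForm) : ℤ := 4 * Q.a * Q.b - Q.d ^ 2

/-- The minor of the Hessian matrix with rows `x, z` and columns `x, z`. -/
def minorXZ (Q : TernaryForm) : ℤ := 4 * Q.a * Q.c - Q.e ^ 2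

/-- The minor of the Hessian matrix with rows `x, y` and columns `x, z`. -/
def minorMixed (Q : TernaryForm) : ℤ := 2 * Q.a * Q.f - Q.d * Q.e

variable {Q R : TernaryForm}

lemma toQuadraticForm_apply (Q : TernaryForm) (v : Fin 3 → ℤ) :
    Q.toQuadraticForm v = Q.a * v 0 ^ 2 + Q.b * v 1 ^ 2 + Q.c * v 2 ^ 2 +
      Q.d * v 0 * v 1 + Q.e * v 0 * v 2 + Q.f * v 1 * v 2 := by
  simp only [toQuadraticForm, Matrix.toQuadraticForm', LinearMap.BilinMap.toQuadraticMap_apply,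
    Matrix.toLinearMap₂'_apply', dotProduct, Matrix.mulVec, Fin.sum_univ_three, Matrix.of_apply,
    Matrix.cons_val]
  ring

lemma minorXY_mul_minorXZ (Q : TernaryForm) :
    Q.minorXY * Q.minorXZ = 4 * Q.a * Q.disc + Q.minorMixed ^ 2 := by
  simp only [minorXY, minorXZ, minorMixed, disc]
  ring

lemma toMatrix'_polarBilin (Q : TernaryForm) :
    LinearMap.BilinForm.toMatrix' Q.toQuadraticForm.polarBilin =
      !![2 * Q.a, Q.d, Q.e; Q.d, 2 * Q.b, Q.f; Q.e, Q.f, 2 * Q.c] := by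
  ext i j
  fin_cases i <;> fin_cases j <;>
    simp [LinearMap.BilinForm.toMatrix'_apply, QuadraticMap.polar, toQuadraticForm_apply] <;> ring

lemma two_mul_disc (Q : TernaryForm) :
    2 * Q.disc = (LinearMap.BilinForm.toMatrix' Q.toQuadraticForm.polarBilin).det := by
  rw [toMatrix'_polarBilin, Matrix.det_fin_three, disc]
  simp only [Matrix.of_apply, Matrix.cons_val]
  ring

lemma disc_eq_of_equivalent (h : Q.toQuadraticForm.Equivalent R.toQuadraticForm) :
    Q.disc = R.disc := by
  obtain ⟨g⟩ := h
  have hcomp : R.toQuadraticForm.comp (g.toLinearEquiv : (Fin 3 → ℤ) →ₗ[ℤ] Fin 3 → ℤ) =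
      Q.toQuadraticForm := QuadraticMap.ext g.map_app
  have hdet :
      (LinearMap.toMatrix' (g.toLinearEquiv : (Fin 3 → ℤ) →ₗ[ℤ] Fin 3 → ℤ)).det ^ 2 = 1 := by
    rw [LinearMap.det_toMatrix']
    exact Int.isUnit_sq g.toLinearEquiv.isUnit_det'
  have key : 2 * Q.disc = 2 * R.disc := by
    rw [two_mul_disc, two_mul_disc, ← hcomp, QuadraticMap.polarBilin_comp,
      LinearMap.BilinForm.toMatrix', LinearMap.toMatrix₂'_compl₁₂, Matrix.det_mul,
      Matrix.det_mul, Matrix.det_transpose]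
    linear_combination (LinearMap.toMatrix₂' ℤ R.toQuadraticForm.polarBilin).det * hdet
  exact mul_left_cancel₀ two_ne_zero key

/-- The form obtained by the substitution `x ↦ x + k y`. -/
def shearXY (Q : TernaryForm) (k : ℤ) : TernaryForm where
  __ := Q
  b := Q.b + k * Q.d + k ^ 2 * Q.a
  d := Q.d + k * (2 * Q.a)
  f := Q.f + k * Q.e

/-- The form obtained by the substitution `x ↦ x + k z`. -/
def shearXZ (Q : TernaryForm) (k : ℤ) : TernaryForm where
  __ := Q
  c := Q.c + k * Q.e + k ^ 2 * Q.a
  e := Q.e + k * (2 * Q.a)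
  f := Q.f + k * Q.d

/-- The form obtained by the substitution `y ↦ y + k z`. -/
def shearYZ (Q : TernaryForm) (k : ℤ) : TernaryForm where
  __ := Q
  c := Q.c + k * Q.f + k ^ 2 * Q.b
  e := Q.e + k * Q.d
  f := Q.f + k * (2 * Q.b)

/-- The form obtained by exchanging `x` and `y`. -/
def swapXY (Q : TernaryForm) : TernaryForm := ⟨Q.b, Q.a, Q.c, Q.d, Q.f, Q.e⟩

/-- The form obtained by exchanging `y` and `z`. -/
def swapYZ (Q : TernaryForm) : TernaryForm := ⟨Q.a, Q.c, Q.b, Q.e, Q.d, Q.f⟩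

lemma equivalent_shearXY (Q : TernaryForm) (k : ℤ) :
    Q.toQuadraticForm.Equivalent (Q.shearXY k).toQuadraticForm := by
  refine equivalent_of_apply_mulVec !![1, k, 0; 0, 1, 0; 0, 0, 1] (by simp [Matrix.det_fin_three])
    fun v ↦ ?_
  simp only [toQuadraticForm_apply, shearXY, dotProduct, Fin.sum_univ_three, Matrix.cons_mulVec,
    Matrix.empty_mulVec, Matrix.cons_val]
  ring

lemma equivalent_shearXZ (Q : TernaryForm) (k : ℤ) :
    Q.toQuadraticForm.Equivalent (Q.shearXZ k).toQuadraticForm := by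
  refine equivalent_of_apply_mulVec !![1, 0, k; 0, 1, 0; 0, 0, 1] (by simp [Matrix.det_fin_three])
    fun v ↦ ?_
  simp only [toQuadraticForm_apply, shearXZ, dotProduct, Fin.sum_univ_three, Matrix.cons_mulVec,
    Matrix.empty_mulVec, Matrix.cons_val]
  ring

lemma equivalent_shearYZ (Q : TernaryForm) (k : ℤ) :
    Q.toQuadraticForm.Equivalent (Q.shearYZ k).toQuadraticForm := by
  refine equivalent_of_apply_mulVec !![1, 0, 0; 0, 1, k; 0, 0, 1] (by simp [Matrix.det_fin_three])
    fun v ↦ ?_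
  simp only [toQuadraticForm_apply, shearYZ, dotProduct, Fin.sum_univ_three, Matrix.cons_mulVec,
    Matrix.empty_mulVec, Matrix.cons_val]
  ring

lemma equivalent_swapXY (Q : TernaryForm) :
    Q.toQuadraticForm.Equivalent Q.swapXY.toQuadraticForm := by
  refine equivalent_of_apply_mulVec !![0, 1, 0; 1, 0, 0; 0, 0, 1] (by simp [Matrix.det_fin_three])
    fun v ↦ ?_
  simp only [toQuadraticForm_apply, swapXY, dotProduct, Fin.sum_univ_three, Matrix.cons_mulVec,
    Matrix.empty_mulVec, Matrix.cons_val]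
  ring

lemma equivalent_swapYZ (Q : TernaryForm) :
    Q.toQuadraticForm.Equivalent Q.swapYZ.toQuadraticForm := by
  refine equivalent_of_apply_mulVec !![1, 0, 0; 0, 0, 1; 0, 1, 0] (by simp [Matrix.det_fin_three])
    fun v ↦ ?_
  simp only [toQuadraticForm_apply, swapYZ, dotProduct, Fin.sum_univ_three, Matrix.cons_mulVec,
    Matrix.empty_mulVec, Matrix.cons_val]
  ring

lemma minorXY_shearXY (Q : TernaryForm) (k : ℤ) : (Q.shearXY k).minorXY = Q.minorXY := by
  simp only [minorXY, shearXY]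
  ring

lemma minorMixed_shearYZ (Q : TernaryForm) (k : ℤ) :
    (Q.shearYZ k).minorMixed = Q.minorMixed + k * Q.minorXY := by
  simp only [minorMixed, minorXY, shearYZ]
  ring

lemma minorMixed_shearXZ (Q : TernaryForm) (k : ℤ) :
    (Q.shearXZ k).minorMixed = Q.minorMixed := by
  simp only [minorMixed, shearXZ]
  ring

lemma posDef_of_minors_pos (ha : 0 < Q.a) (hm : 0 < Q.minorXY) (hdisc : 0 < Q.disc) :
    Q.toQuadraticForm.PosDef := by
  intro v hv
  by_contra! hneg
  rw [toQuadraticForm_apply] at hneg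
  set x := v 0
  set y := v 1
  set z := v 2
  set q := Q.a * x ^ 2 + Q.b * y ^ 2 + Q.c * z ^ 2 + Q.d * x * y + Q.e * x * z + Q.f * y * z
  have hsq : 4 * Q.a * Q.minorXY * q = Q.minorXY * (2 * Q.a * x + Q.d * y + Q.e * z) ^ 2 +
      (Q.minorXY * y + Q.minorMixed * z) ^ 2 + 4 * Q.a * Q.disc * z ^ 2 := by
    simp only [q, minorXY, minorMixed, disc]
    ring
  have hle : 4 * Q.a * Q.minorXY * q ≤ 0 := mul_nonpos_of_nonneg_of_nonpos (by positivity) hneg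
  have h₁ : 0 ≤ Q.minorXY * (2 * Q.a * x + Q.d * y + Q.e * z) ^ 2 := by positivity
  have h₂ : 0 ≤ (Q.minorXY * y + Q.minorMixed * z) ^ 2 := by positivity
  have h₃ : 0 ≤ 4 * Q.a * Q.disc * z ^ 2 := by positivity
  have hz : z = 0 := by
    simpa [ha.ne', hdisc.ne'] using (by linarith : 4 * Q.a * Q.disc * z ^ 2 = 0)
  have hy : y = 0 := by
    simpa [hz, hm.ne'] using (by linarith : (Q.minorXY * y + Q.minorMixed * z) ^ 2 = 0)
  have hx : x = 0 := by
    simpa [hy, hz, hm.ne', ha.ne'] using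
      (by linarith : Q.minorXY * (2 * Q.a * x + Q.d * y + Q.e * z) ^ 2 = 0)
  exact hv (funext fun i ↦ by fin_cases i <;> assumption)

lemma a_pos (hQ : Q.toQuadraticForm.PosDef) : 0 < Q.a := by
  simpa [toQuadraticForm_apply] using hQ ![1, 0, 0] (by simp)

lemma minorXY_pos (hQ : Q.toQuadraticForm.PosDef) : 0 < Q.minorXY := by
  have ha := a_pos hQ
  have hv := hQ ![-Q.d, 2 * Q.a, 0] (by simp [ha.ne'])
  refine pos_of_mul_pos_right (a := Q.a) ?_ ha.le
  simp only [toQuadraticForm_apply, Matrix.cons_val] at hv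
  simp only [minorXY]
  linarith

/-- Reduced positive ternary forms in the sense of Hermite: `2 |minorMixed| ≤ minorXY ≤ minorXZ`
makes the binary form formed by the minors reduced as well. The half-discriminant bounds
the coefficients of such a form. -/
structure IsReduced (Q : TernaryForm) : Prop where
  abs_d_le : |Q.d| ≤ Q.a
  abs_e_le : |Q.e| ≤ Q.a
  a_le_b : Q.a ≤ Q.b
  two_mul_abs_minorMixed_le : 2 * |Q.minorMixed| ≤ Q.minorXY
  minorXY_le_minorXZ : Q.minorXY ≤ Q.minorXZ

lemma exists_equivalent_abs_le (hQ : Q.toQuadraticForm.PosDef) :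
    ∃ R : TernaryForm, Q.toQuadraticForm.Equivalent R.toQuadraticForm ∧
      R.a = Q.a ∧ R.minorXY = Q.minorXY ∧
      |R.d| ≤ R.a ∧ |R.e| ≤ R.a ∧ 2 * |R.minorMixed| ≤ R.minorXY := by
  have ha : 0 < 2 * Q.a := by linarith [a_pos hQ]
  obtain ⟨i, hi⟩ := exists_two_mul_abs_add_mul_le Q.d ha
  set S := Q.shearXY i
  obtain ⟨j, hj⟩ := exists_two_mul_abs_add_mul_le S.minorMixed (minorXY_pos hQ)
  obtain ⟨k, hk⟩ := exists_two_mul_abs_add_mul_le (S.shearYZ j).e ha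
  have hm : S.minorXY = Q.minorXY := minorXY_shearXY Q i
  refine ⟨(S.shearYZ j).shearXZ k,
    ((equivalent_shearXY Q i).trans (equivalent_shearYZ S j)).trans (equivalent_shearXZ _ k),
    rfl, hm, le_of_mul_le_mul_left hi two_pos, le_of_mul_le_mul_left hk two_pos, ?_⟩
  rw [minorMixed_shearXZ, minorMixed_shearYZ, hm]
  exact hj.trans_eq hm.symm

lemma exists_equivalent_isReduced (hQ : Q.toQuadraticForm.PosDef) :
    ∃ R : TernaryForm, Q.toQuadraticForm.Equivalent R.toQuadraticForm ∧ R.IsReduced := by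
  -- Exchanging `y` and `z` exchanges the two minors, so the inequalities between coefficients and
  -- between minors hold as soon as `a + minorXY` is minimal in the class.
  obtain ⟨S, hQS, hmin⟩ := exists_minimalFor_of_wellFoundedLT
    (fun S : TernaryForm ↦ Q.toQuadraticForm.Equivalent S.toQuadraticForm)
    (fun S ↦ (S.a + S.minorXY).toNat) ⟨Q, .refl _⟩
  obtain ⟨R, hSR, ha, hm, hd, he, hB⟩ := exists_equivalent_abs_le (posDef_of_equivalent hQS hQ)
  have hQR := hQS.trans hSR
  have hle {T : TernaryForm} (hRT : R.toQuadraticForm.Equivalent T.toQuadraticForm) :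
      R.a + R.minorXY ≤ T.a + T.minorXY := by
    have hT := posDef_of_equivalent (hQR.trans hRT) hQ
    have := hmin (hQR.trans hRT)
    have := a_pos hT
    have := minorXY_pos hT
    grind
  have hXY := hle (equivalent_swapXY R)
  have hYZ := hle (equivalent_swapYZ R)
  refine ⟨R, hQR, hd, he, ?_, hB, ?_⟩
  · simp only [minorXY, swapXY] at hXY
    linarith
  · simpa [minorXY, minorXZ, swapYZ] using hYZ

lemma IsReduced.three_mul_minorXY_sq_le (hR : Q.IsReduced) (hm : 0 < Q.minorXY) :
    3 * Q.minorXY ^ 2 ≤ 16 * Q.a * Q.disc := by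
  have hB : 4 * Q.minorMixed ^ 2 ≤ Q.minorXY ^ 2 := by
    have := hR.two_mul_abs_minorMixed_le
    have := sq_le_sq' (by linarith [abs_nonneg Q.minorMixed]) this
    linarith [mul_pow 2 |Q.minorMixed| 2, sq_abs Q.minorMixed]
  nlinarith [minorXY_mul_minorXZ Q, mul_le_mul_of_nonneg_left hR.minorXY_le_minorXZ hm.le]

lemma IsReduced.three_mul_a_sq_le (hR : Q.IsReduced) : 3 * Q.a ^ 2 ≤ Q.minorXY := by
  have hd : Q.d ^ 2 ≤ Q.a ^ 2 := sq_le_sq' (abs_le.mp hR.abs_d_le).1 (abs_le.mp hR.abs_d_le).2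
  have ha : 0 ≤ Q.a := (abs_nonneg _).trans hR.abs_d_le
  simp only [minorXY]
  nlinarith [mul_le_mul_of_nonneg_left hR.a_le_b ha]

lemma IsReduced.a_pow_three_le (hR : Q.IsReduced) (ha : 0 < Q.a) :
    27 * Q.a ^ 3 ≤ 16 * Q.disc := by
  have hm := hR.three_mul_a_sq_le
  refine le_of_mul_le_mul_left ?_ ha
  calc Q.a * (27 * Q.a ^ 3) = 3 * (3 * Q.a ^ 2) ^ 2 := by ring
    _ ≤ 3 * Q.minorXY ^ 2 := by gcongr
    _ ≤ 16 * Q.a * Q.disc := hR.three_mul_minorXY_sq_le (by nlinarith)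
    _ = Q.a * (16 * Q.disc) := by ring

lemma IsReduced.coeff_of_disc_eq_three (hR : Q.IsReduced) (ha : 0 < Q.a) (hdisc : Q.disc = 3) :
    Q.a = 1 ∧ Q.b = 1 ∧ Q.c = 1 ∧
      (Q.d ^ 2 = 1 ∧ Q.e = 0 ∧ Q.f = 0 ∨ Q.d = 0 ∧ Q.e ^ 2 = 1 ∧ Q.f = 0 ∨
        Q.d = 0 ∧ Q.e = 0 ∧ Q.f ^ 2 = 1) := by
  have ha₁ : Q.a = 1 := by
    by_contra hne
    have : 2 ^ 3 ≤ Q.a ^ 3 := pow_le_pow_left₀ zero_le_two (by omega) 3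
    linarith [hR.a_pow_three_le ha]
  have hm₀ := hR.three_mul_a_sq_le
  have hm : Q.minorXY ≤ 4 := by nlinarith [hR.three_mul_minorXY_sq_le (by nlinarith)]
  have hB := abs_le.mp (by linarith [hR.two_mul_abs_minorMixed_le] : |Q.minorMixed| ≤ 2)
  obtain ⟨hd₁, hd₂⟩ := abs_le.mp hR.abs_d_le
  obtain ⟨he₁, he₂⟩ := abs_le.mp hR.abs_e_le
  have hab := hR.a_le_b
  obtain ⟨a, b, c, d, e, f⟩ := Q
  simp only [minorXY, minorMixed, disc] at *
  subst ha₁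
  obtain rfl : b = 1 := by nlinarith
  have hf₁ : -1 ≤ f := by nlinarith
  have hf₂ : f ≤ 1 := by nlinarith
  interval_cases d <;> interval_cases e <;> interval_cases f <;> omega

lemma equivalent_of_sq_eq_one {ε : ℤ} (hε : ε ^ 2 = 1) :
    (toQuadraticForm ⟨1, 1, 1, ε, 0, 0⟩).Equivalent (toQuadraticForm ⟨1, 1, 1, 1, 0, 0⟩) := by
  rcases sq_eq_one_iff.mp hε with rfl | rfl
  · exact .refl _
  · exact equivalent_shearXY ⟨1, 1, 1, -1, 0, 0⟩ 1

theorem equivalent_of_disc_eq_three (hQ : Q.toQuadraticForm.PosDef) (hdisc : Q.disc = 3) :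
    Q.toQuadraticForm.Equivalent (toQuadraticForm ⟨1, 1, 1, 1, 0, 0⟩) := by
  obtain ⟨R, hQR, hR⟩ := exists_equivalent_isReduced hQ
  have hcoeff := hR.coeff_of_disc_eq_three (a_pos (posDef_of_equivalent hQR hQ))
    (disc_eq_of_equivalent hQR ▸ hdisc)
  refine hQR.trans ?_
  obtain ⟨a, b, c, d, e, f⟩ := R
  obtain ⟨rfl, rfl, rfl, ⟨hd, rfl, rfl⟩ | ⟨rfl, he, rfl⟩ | ⟨rfl, rfl, hf⟩⟩ := hcoeff
  · exact equivalent_of_sq_eq_one hd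
  · exact (equivalent_swapYZ _).trans (equivalent_of_sq_eq_one he)
  · exact ((equivalent_swapXY _).trans (equivalent_swapYZ _)).trans (equivalent_of_sq_eq_one hf)

end TernaryForm

lemma exists_prime_three_mul_add_one_eq {N : ℕ} (hN : N % 3 = 1) :
    ∃ p D : ℕ, p.Prime ∧ 4 * N * D = 3 * p + 1 := by
  obtain ⟨r, hr⟩ : ∃ r, 3 * r + 1 = 4 * N := ⟨(4 * N - 1) / 3, by omega⟩
  have hcop : r.Coprime (4 * N) := by simp [← hr]
  obtain ⟨p, hrp, hp, hmod⟩ := Nat.forall_exists_prime_gt_and_modEq r (q := 4 * N) (by omega) hcop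
  obtain ⟨k, hk⟩ := (Nat.modEq_iff_dvd' hrp.le).mp hmod.symm
  have hpk : p = r + 4 * N * k := by omega
  exact ⟨p, 1 + 3 * k, hp, by rw [hpk]; linarith⟩

lemma jacobiSym_eq_one_of_four_mul_mul_eq {N p D : ℕ} (hN : N % 12 = 7)
    (h : 4 * N * D = 3 * p + 1) : J(N | p) = 1 := by
  have hNodd : Odd N := Nat.odd_iff.mpr (by omega)
  have hp : p % 4 = 1 := by
    rw [mul_assoc] at h
    omega
  have h_three : J(3 | N) = -1 := by
    have hrec := jacobiSym.quadratic_reciprocity_three_mod_four (a := 3) (b := N) rfl (by omega)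
    have hmod : (N : ℤ) % (3 : ℕ) = 1 % (3 : ℕ) := by omega
    rw [jacobiSym.mod_left' hmod, jacobiSym.one_left] at hrec
    exact_mod_cast hrec
  have h_neg_one : J(-1 | N) = -1 := by
    rw [jacobiSym.at_neg_one hNodd, ZMod.χ₄_nat_three_mod_four (by omega)]
  have h_three_mul : J(3 * p | N) = J(-1 | N) := by
    refine jacobiSym.mod_left' (Int.ModEq.symm (Int.modEq_iff_dvd.mpr ⟨4 * D, ?_⟩))
    push_cast [← @Nat.cast_inj ℤ] at h
    linarith
  rw [jacobiSym.mul_left, h_three, h_neg_one] at h_three_mul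
  rw [jacobiSym.quadratic_reciprocity_one_mod_four' hNodd hp]
  linarith

lemma isSquare_neg_of_four_mul_mul_eq {N p D : ℕ} [Fact p.Prime] (hN : N % 12 = 7)
    (h : 4 * N * D = 3 * p + 1) : IsSquare (-D : ZMod p) := by
  have hp : p % 4 ≠ 3 := by
    rw [mul_assoc] at h
    omega
  have h_neg_one : IsSquare (-1 : ZMod p) := ZMod.exists_sq_eq_neg_one_iff.mpr hp
  have hsq : IsSquare (N : ZMod p) := by
    exact_mod_cast ZMod.isSquare_of_jacobiSym_eq_one (jacobiSym_eq_one_of_four_mul_mul_eq hN h)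
  have hcast : (4 * N * D : ZMod p) = 1 := by
    simpa using congrArg (Nat.cast : ℕ → ZMod p) h
  have hD : (-D : ZMod p) = -1 * N * (2 * D) ^ 2 := by linear_combination (D : ZMod p) * hcast
  rw [hD]
  exact (h_neg_one.mul hsq).mul (IsSquare.sq _)

lemma exists_mul_sub_sq_eq_of_isSquare_neg {m : ℕ} {D : ℤ} (h : IsSquare (-D : ZMod m)) :
    ∃ a d : ℤ, a * m - d ^ 2 = D := by
  obtain ⟨w, hw⟩ := h
  obtain ⟨d, rfl⟩ := ZMod.intCast_surjective w
  have hdvd : (m : ℤ) ∣ D + d ^ 2 := by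
    rw [← ZMod.intCast_zmod_eq_zero_iff_dvd]
    push_cast
    linear_combination -hw
  obtain ⟨a, ha⟩ := hdvd
  exact ⟨a, d, by linarith⟩

lemma dvd_and_dvd_of_dvd_sq_add_sq {p : ℕ} [Fact p.Prime] (hp : p % 4 = 3) {x y : ℤ}
    (h : (p : ℤ) ∣ x ^ 2 + y ^ 2) : (p : ℤ) ∣ x ∧ (p : ℤ) ∣ y := by
  have key {x y : ZMod p} (h : x ^ 2 + y ^ 2 = 0) : x = 0 := by
    by_contra hx
    exact ZMod.mod_four_ne_three_of_sq_eq_neg_sq hx (eq_neg_of_add_eq_zero_left h) hp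
  simp only [← ZMod.intCast_zmod_eq_zero_iff_dvd] at h ⊢
  push_cast at h
  exact ⟨key h, key ((add_comm _ _).trans h)⟩

theorem exists_eisenstein_norm_add_sq_eq_three_mul {N : ℕ} (hN : N % 12 = 7) :
    ∃ u v w : ℤ, u ^ 2 + u * v + v ^ 2 + w ^ 2 = 3 * N := by
  obtain ⟨p, D, hp, h⟩ := exists_prime_three_mul_add_one_eq (N := N) (by omega)
  have : Fact p.Prime := ⟨hp⟩
  obtain ⟨a, d, had⟩ := exists_mul_sub_sq_eq_of_isSquare_neg (D := D)
    (by exact_mod_cast isSquare_neg_of_four_mul_mul_eq hN h)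
  have hp₀ : (0 : ℤ) < p := by exact_mod_cast hp.pos
  have hD : (0 : ℤ) < D := by
    rw [Nat.cast_pos, Nat.pos_iff_ne_zero]
    rintro rfl
    omega
  have ha : 0 < a := pos_of_mul_pos_left (by nlinarith) hp₀.le
  push_cast [← @Nat.cast_inj ℤ] at h
  set Q : TernaryForm := ⟨a, p, 3 * N, 2 * d, 3, 0⟩ with hQ
  have hminor : 0 < Q.minorXY := by
    simp only [hQ, TernaryForm.minorXY]
    linarith
  have hdisc : Q.disc = 3 := by
    simp only [hQ, TernaryForm.disc]
    linear_combination 12 * N * had + 3 * h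
  have hpos := TernaryForm.posDef_of_minors_pos ha hminor (by omega)
  obtain ⟨g⟩ := TernaryForm.equivalent_of_disc_eq_three hpos hdisc
  have hval := g.map_app ![0, 0, 1]
  set v := g ![0, 0, 1]
  simp only [hQ, TernaryForm.toQuadraticForm_apply, Matrix.cons_val] at hval
  exact ⟨v 0, v 1, v 2, by linear_combination hval⟩

lemma exists_sq_add_three_mul_sq_eq_eisenstein_norm (x y : ℤ) :
    ∃ a b : ℤ, a ^ 2 + 3 * b ^ 2 = x ^ 2 + x * y + y ^ 2 := by
  rcases Int.even_or_odd' y with ⟨t, rfl | hy⟩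
  · exact ⟨x + t, t, by ring⟩
  rcases Int.even_or_odd' x with ⟨s, rfl | hx⟩
  · exact ⟨y + s, s, by ring⟩
  · obtain rfl : y = 2 * (s + t + 1) - x := by linarith
    exact ⟨x - (s + t + 1), s + t + 1, by ring⟩

theorem exists_sq_add_three_mul_sq_add_three_mul_sq_eq {N : ℕ} (hN : N % 12 = 7) :
    ∃ a b c : ℤ, a ^ 2 + 3 * b ^ 2 + 3 * c ^ 2 = N := by
  obtain ⟨u, v, w, h⟩ := exists_eisenstein_norm_add_sq_eq_three_mul hN
  have hdvd : ((3 : ℕ) : ℤ) ∣ (u - v) ^ 2 + w ^ 2 := ⟨N - u * v, by push_cast; linarith⟩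
  obtain ⟨⟨s, hs⟩, ⟨t, rfl⟩⟩ := dvd_and_dvd_of_dvd_sq_add_sq (by norm_num) hdvd
  obtain rfl : u = v + 3 * s := by push_cast at hs; linarith
  obtain ⟨a, b, hab⟩ := exists_sq_add_three_mul_sq_eq_eisenstein_norm (v + s) s
  refine ⟨a, b, t, ?_⟩
  push_cast at h
  linarith

lemma even_sq_add_three_mul_sq_iff {a b : ℤ} : Even (a ^ 2 + 3 * b ^ 2) ↔ (Even a ↔ Even b) := by
  simp [parity_simps, (by decide : ¬Even (3 : ℤ))]

lemma exists_odd_sq_add_three_mul_sq_eq {a b m : ℤ} (hm : Odd m)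
    (h : a ^ 2 + 3 * b ^ 2 = 4 * m) :
    ∃ a' b' : ℤ, Odd a' ∧ Odd b' ∧ a' ^ 2 + 3 * b' ^ 2 = a ^ 2 + 3 * b ^ 2 := by
  have hab : Even a ↔ Even b := even_sq_add_three_mul_sq_iff.mp ⟨2 * m, by linarith⟩
  rcases Int.even_or_odd b with hb | hb
  · obtain ⟨x, rfl⟩ := (hab.mpr hb).two_dvd
    obtain ⟨y, rfl⟩ := hb.two_dvd
    have hxy : ¬(Even x ↔ Even y) := by
      rw [← even_sq_add_three_mul_sq_iff, Int.not_even_iff_odd]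
      convert hm using 1
      linarith
    exact ⟨x + 3 * y, x - y, by grind, by grind, by ring⟩
  · exact ⟨a, b, by grind, hb, rfl⟩

lemma exists_odd_sq_add_three_mul_sq_add_three_mul_sq_eq {a b c : ℤ}
    (h : (a ^ 2 + 3 * b ^ 2 + 3 * c ^ 2) % 8 = 7) :
    ∃ a' b' c' : ℤ, Odd a' ∧ Odd b' ∧ Odd c' ∧
      a' ^ 2 + 3 * b' ^ 2 + 3 * c' ^ 2 = a ^ 2 + 3 * b ^ 2 + 3 * c ^ 2 := by
  wlog hc : Odd c generalizing b c
  · have hb : Odd b := by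
      by_contra hb
      obtain ⟨s, rfl⟩ := (Int.not_odd_iff_even.mp hb).two_dvd
      obtain ⟨t, rfl⟩ := (Int.not_odd_iff_even.mp hc).two_dvd
      rcases Int.even_or_odd' a with ⟨r, rfl | rfl⟩ <;> ring_nf at h <;> omega
    have := this (b := c) (c := b) (by rwa [add_right_comm]) hb
    rwa [add_right_comm (a ^ 2)] at this
  obtain ⟨k, hk⟩ := Int.eight_dvd_sq_sub_one_of_odd hc
  obtain ⟨a', b', ha', hb', hab⟩ := exists_odd_sq_add_three_mul_sq_eq (a := a) (b := b)
    (m := 2 * ((a ^ 2 + 3 * b ^ 2) / 8) + 1) ⟨_, rfl⟩ (by omega)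
  exact ⟨a', b', c, ha', hb', hc, by rw [hab]⟩

lemma exists_odd_not_three_dvd_sq_add_three_mul_sq_eq {a b : ℤ} (ha : Odd a)
    (hb : Odd b) (h3 : ¬3 ∣ a) :
    ∃ a' b' : ℤ, a' ^ 2 + 3 * b' ^ 2 = a ^ 2 + 3 * b ^ 2 ∧
      Odd a' ∧ ¬3 ∣ a' ∧ Odd b' ∧ ¬3 ∣ b' := by
  obtain hb3 | hb3 := em' (3 ∣ b)
  · exact ⟨a, b, rfl, ha, h3, hb, hb3⟩
  wlog h4 : ¬4 ∣ a - b generalizing b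
  · have := this hb.neg (by omega) (by grind)
    rwa [neg_sq] at this
  obtain ⟨t, rfl⟩ : ∃ t, a = b + 2 * t := ⟨(a - b) / 2, by grind⟩
  exact ⟨2 * b + t, t, by ring, by grind, by omega, by grind, by omega⟩

lemma twentyFour_mul_p5_add_one (x : ℤ) : 24 * p5 x + 1 = (6 * x - 1) ^ 2 := by
  have hdvd : 2 ∣ 3 * x ^ 2 - x := by
    rw [← even_iff_two_dvd]
    simp [parity_simps, (by decide : ¬Even (3 : ℤ))]
  rw [p5]
  linear_combination 12 * Int.mul_ediv_cancel' hdvd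

lemma exists_twentyFour_mul_p5_add_one_eq_sq {a : ℤ} (ha : Odd a) (ha₃ : ¬3 ∣ a) :
    ∃ x : ℤ, 24 * p5 x + 1 = a ^ 2 := by
  have ha₂ := Int.odd_iff.mp ha
  obtain ⟨x, hx | hx⟩ : ∃ x, a = 6 * x - 1 ∨ a = -(6 * x - 1) := by
    rcases (by omega : a % 6 = 1 ∨ a % 6 = 5) with h | h
    · exact ⟨(1 - a) / 6, by omega⟩
    · exact ⟨(a + 1) / 6, by omega⟩
  · exact ⟨x, by rw [twentyFour_mul_p5_add_one, hx]⟩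
  · exact ⟨x, by rw [twentyFour_mul_p5_add_one, hx, neg_sq]⟩

theorem p5_add_3p5_add_3p5_universal (n : ℕ) :
    ∃ x y z : ℤ, (n : ℤ) = p5 x + 3 * p5 y + 3 * p5 z := by
  obtain ⟨a₀, b₀, c₀, h₀⟩ :=
    exists_sq_add_three_mul_sq_add_three_mul_sq_eq (N := 24 * n + 7) (by omega)
  push_cast at h₀
  obtain ⟨a₁, b₁, c₁, ha₁, hb₁, hc₁, h₁⟩ :=
    exists_odd_sq_add_three_mul_sq_add_three_mul_sq_eq (a := a₀) (b := b₀) (c := c₀) (by omega)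
  have ha₁' : ¬3 ∣ a₁ := by
    rintro ⟨t, rfl⟩
    ring_nf at h₀ h₁
    omega
  obtain ⟨a₂, b, h₂, ha₂, ha₂', hb, hb'⟩ :=
    exists_odd_not_three_dvd_sq_add_three_mul_sq_eq ha₁ hb₁ ha₁'
  obtain ⟨a, c, h₃, ha, ha', hc, hc'⟩ :=
    exists_odd_not_three_dvd_sq_add_three_mul_sq_eq ha₂ hc₁ ha₂'
  obtain ⟨x, hx⟩ := exists_twentyFour_mul_p5_add_one_eq_sq ha ha'
  obtain ⟨y, hy⟩ := exists_twentyFour_mul_p5_add_one_eq_sq hb hb'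
  obtain ⟨z, hz⟩ := exists_twentyFour_mul_p5_add_one_eq_sq hc hc'
  exact ⟨x, y, z, by linarith⟩
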